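/- With the aligned setup of the context, for every bi-invariant symmetric bilinear form Q = y_1·κ_{g_1} + … + y_s·κ_{g_s} on g, every j = 1,…,s−1 and all Z,W ∈ k, one has Q(Z, φ_j(W)) = C_{s+j}·κ_g(Z,W), where C_{s+j} := y_1/c_1 + … + y_j/c_j + A_{s+j}·y_{j+1}/c_{j+1} and κ_g is the Killing form of g. -/

import Mathlib

/-!
Write `B_i(Z, W) = κ_{g_i}(Z_i, W_i)`. Since the `g_i` are ideals, `B_i(Z, W) = κ_g(Z_i, W_i)`, and
since distinct `g_i` are `κ_g`-orthogonal, `κ_g = ∑ B_i` (`killingForm_subalgebra_of_ideal`,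
`killingForm_eq_zero_of_disjoint`).

The heart of the matter is that on `k × k` the form `c_i B_i` does not depend on `i`. On `k_0 × k_0`
it is `-⟨·,·⟩_0`. On `k_j × k_j` it is `κ_{k_j} / λ_j`, because `π_i` restricts to an isomorphism of
the simple algebra `k_j` onto `π_i(k_j)` (`killingForm_image_of_isSimple`). Finally `k_j` is spanned
by brackets `[U, V]` with `U, V ∈ k_j` (`lie_induction_of_isSimple`), and for `X ∈ k` invariance gives
`B_i(X, [U, V]) = B_i([X, U], V)`, where `[X, U] ∈ k_j`; so `k × k_j` reduces to `k_j × k_j`. This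
also treats `k_j × k_l` with `j ≠ l`, so no separate orthogonality argument is needed.

As `∑ 1/c_i = 1`, summing over `i` gives `c_i B_i = κ_g` on `k`. Since `π_i ∘ φ_j` is a scalar
multiple of `π_i`, the claim follows by collecting these scalars.
-/

open scoped BigOperators

section Helpers

variable {L : Type} [LieRing L] [LieAlgebra ℝ L]

/-- The Killing form of a subalgebra that happens to be an ideal is the restriction of the ambient
Killing form. -/
lemma killingForm_subalgebra_of_ideal [FiniteDimensional ℝ L] (K : LieSubalgebra ℝ L)
    (hK : ∀ X Y : L, Y ∈ K → ⁅X, Y⁆ ∈ K) (U V : K) :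
    killingForm ℝ K U V = killingForm ℝ L (U : L) (V : L) := by
  let I : LieIdeal ℝ L := { K.toSubmodule with lie_mem := fun {x m} hm => hK x m hm }
  have h := LieIdeal.killingForm_eq ℝ L I
  exact LinearMap.congr_fun (LinearMap.congr_fun h ⟨U, U.2⟩) ⟨V, V.2⟩

/-- Two ideals with zero intersection are orthogonal for the Killing form: `ad X ∘ ad Y` maps into
the intersection. -/
lemma killingForm_eq_zero_of_disjoint (K K' : LieSubalgebra ℝ L)
    (hK : ∀ X Y : L, Y ∈ K → ⁅X, Y⁆ ∈ K) (hK' : ∀ X Y : L, Y ∈ K' → ⁅X, Y⁆ ∈ K')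
    (hd : ∀ X, X ∈ K → X ∈ K' → X = 0) {X Y : L} (hX : X ∈ K) (hY : Y ∈ K') :
    killingForm ℝ L X Y = 0 := by
  have h0 : (LieAlgebra.ad ℝ L X) ∘ₗ (LieAlgebra.ad ℝ L Y) = 0 := by
    ext v
    simp only [LinearMap.comp_apply, LieAlgebra.ad_apply, LinearMap.zero_apply]
    apply hd
    · rw [← lie_skew]
      exact K.neg_mem (hK _ _ hX)
    · apply hK'
      rw [← lie_skew]
      exact K'.neg_mem (hK' _ _ hY)
  rw [killingForm_apply_apply, h0, map_zero]

/-- A simple Lie algebra is perfect: a linear functional that vanishes on brackets vanishes. -/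
lemma lie_induction_of_isSimple (S : LieSubalgebra ℝ L) (hS : LieAlgebra.IsSimple ℝ S)
    (f : L →ₗ[ℝ] ℝ) (hf : ∀ U V : L, U ∈ S → V ∈ S → f ⁅U, V⁆ = 0) :
    ∀ W ∈ S, f W = 0 := by
  have htop : (⁅(⊤ : LieIdeal ℝ S), (⊤ : LieIdeal ℝ S)⁆ : LieIdeal ℝ S) = ⊤ := by
    refine (hS.eq_bot_or_eq_top _).resolve_left fun h => hS.non_abelian ?_
    rw [← LieSubmodule.lie_abelian_iff_lie_self_eq_bot] at h
    exact (lie_abelian_iff_equiv_lie_abelian LieIdeal.topEquiv).mp h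
  have hspan := LieSubmodule.lieIdeal_oper_eq_linear_span' (R := ℝ) (⊤ : LieIdeal ℝ S)
    (⊤ : LieIdeal ℝ S)
  rw [htop] at hspan
  intro W hW
  have hmem : (⟨W, hW⟩ : S) ∈ Submodule.span ℝ
      {m : S | ∃ x ∈ (⊤ : LieIdeal ℝ S), ∃ n ∈ (⊤ : LieIdeal ℝ S), ⁅x, n⁆ = m} := by
    rw [← hspan]; trivial
  have hle : Submodule.span ℝ
      {m : S | ∃ x ∈ (⊤ : LieIdeal ℝ S), ∃ n ∈ (⊤ : LieIdeal ℝ S), ⁅x, n⁆ = m}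
      ≤ LinearMap.ker (f ∘ₗ S.toSubmodule.subtype) := by
    rw [Submodule.span_le]
    rintro _ ⟨x, -, n, -, rfl⟩
    exact hf x n x.2 n.2
  exact hle hmem

/-- A linear map which respects brackets and whose image of a simple subalgebra `S` is a nonzero
subalgebra `P` identifies the Killing forms of `S` and `P`: its kernel on `S` is an ideal, hence
zero. -/
lemma killingForm_image_of_isSimple (S P : LieSubalgebra ℝ L) (hS : LieAlgebra.IsSimple ℝ S)
    (p : L →ₗ[ℝ] L) (hp : ∀ X Y, p ⁅X, Y⁆ = ⁅p X, p Y⁆)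
    (hP : (P : Set L) = p '' (S : Set L)) (hne : P ≠ ⊥) (U V : S)
    (hU : p U ∈ P) (hV : p V ∈ P) :
    killingForm ℝ P ⟨p U, hU⟩ ⟨p V, hV⟩ = killingForm ℝ S U V := by
  have hmem : ∀ X ∈ S, p X ∈ P := fun X hX => by
    rw [← SetLike.mem_coe, hP]; exact ⟨X, hX, rfl⟩
  let g : S →ₗ⁅ℝ⁆ P :=
    { toFun := fun X => ⟨p X, hmem X X.2⟩
      map_add' := fun X Y => Subtype.ext (by simp)
      map_smul' := fun r X => Subtype.ext (by simp)
      map_lie' := fun {X Y} => Subtype.ext (by simp [hp]) }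
  have hker : g.ker = ⊥ := by
    refine (hS.eq_bot_or_eq_top _).resolve_right fun h => hne ?_
    rw [LieSubalgebra.eq_bot_iff]
    intro X hX
    rw [← SetLike.mem_coe, hP] at hX
    obtain ⟨Y, hY, rfl⟩ := hX
    have : (⟨Y, hY⟩ : S) ∈ g.ker := by rw [h]; trivial
    exact congrArg Subtype.val (LieHom.mem_ker.mp this)
  have hbij : Function.Bijective g := by
    refine ⟨(LieHom.ker_eq_bot g).mp hker, ?_⟩
    rintro ⟨X, hX⟩
    have hX' := hX
    rw [← SetLike.mem_coe, hP] at hX'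
    obtain ⟨Y, hY, rfl⟩ := hX'
    exact ⟨⟨Y, hY⟩, rfl⟩
  exact LieAlgebra.killingForm_of_equiv_apply (LieEquiv.ofBijective g hbij) U V

end Helpers

/-- Aligned setup (`s = m + 1`), `z_i > 0`,
`A_{s+j} = -(c_{j+1}/z_{j+1})(z_1/c_1 + … + z_j/c_j)`,
`φ_j(Z) = (Z_1, …, Z_j, A_{s+j} Z_{j+1}, 0, …, 0)`.  Then for every bi-invariant form
`Q = y_1 κ_{g_1} + … + y_s κ_{g_s}`, every `j` and all `Z, W ∈ k`:
`Q(Z, φ_j(W)) = C_{s+j} κ_g(Z,W)`, where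
`C_{s+j} = y_1/c_1 + … + y_j/c_j + A_{s+j}·y_{j+1}/c_{j+1}`. -/
theorem stmt_11
    {L : Type} [LieRing L] [LieAlgebra ℝ L] [FiniteDimensional ℝ L]
    (hκneg : ∀ X : L, X ≠ 0 → killingForm ℝ L X X < 0)
    {m : ℕ}
    (K : Fin (m + 1) → LieSubalgebra ℝ L)
    (hKideal : ∀ (i : Fin (m + 1)) (X Y : L), Y ∈ K i → ⁅X, Y⁆ ∈ K i)
    (hKsimple : ∀ i, LieAlgebra.IsSimple ℝ ↥(K i))
    (π : Fin (m + 1) → (L →ₗ[ℝ] L))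
    (hπmem : ∀ i X, π i X ∈ K i)
    (hπsum : ∀ X : L, ∑ i, π i X = X)
    (hπid : ∀ i X, X ∈ K i → π i X = X)
    (hπzero : ∀ i j, i ≠ j → ∀ X, X ∈ K i → π j X = 0)
    (k : LieSubalgebra ℝ L) (hk : k ≠ ⊥)
    (k₀ : LieSubalgebra ℝ L)
    (hk₀ : ∀ W : L, W ∈ k₀ ↔ (W ∈ k ∧ ∀ Z ∈ k, ⁅Z, W⁆ = 0))
    {t : ℕ} (kj : Fin t → LieSubalgebra ℝ L)
    (hkjsub : ∀ j, (kj j : Set L) ⊆ (k : Set L))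
    (hkjideal : ∀ (j : Fin t) (Z W : L), Z ∈ k → W ∈ kj j → ⁅Z, W⁆ ∈ kj j)
    (hkjsimple : ∀ j, LieAlgebra.IsSimple ℝ ↥(kj j))
    (hkdecomp : ∀ Z ∈ k, ∃ (Z₀ : L) (f : Fin t → L),
      Z₀ ∈ k₀ ∧ (∀ j, f j ∈ kj j) ∧ Z = Z₀ + ∑ j, f j)
    -- the aligned conditions
    (c : Fin (m + 1) → ℝ) (hcpos : ∀ i, 0 < c i)
    (lam : Fin t → ℝ) (hlam : ∀ j, 0 < lam j)
    (P : Fin (m + 1) → Fin t → LieSubalgebra ℝ L)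
    (hPset : ∀ i j, (P i j : Set L) = (π i) '' (kj j : Set L))
    (hPK : ∀ i j (U : L), U ∈ P i j → U ∈ K i)
    (hPne : ∀ i j, P i j ≠ ⊥)
    (hkilling : ∀ i j (U V : ↥(P i j)),
      killingForm ℝ ↥(P i j) U V
        = (lam j * c i) * killingForm ℝ ↥(K i) ⟨(U : L), hPK i j U U.2⟩ ⟨(V : L), hPK i j V V.2⟩)
    (ip0 : LinearMap.BilinForm ℝ L)
    (hip0symm : ∀ Z W : L, ip0 Z W = ip0 W Z)
    (hip0pos : ∀ Z ∈ k₀, Z ≠ 0 → 0 < ip0 Z Z)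
    (hip0 : ∀ (i : Fin (m + 1)), ∀ Z ∈ k₀, ∀ W ∈ k₀,
      killingForm ℝ ↥(K i) ⟨π i Z, hπmem i Z⟩ ⟨π i W, hπmem i W⟩ = -(1 / c i) * ip0 Z W)
    (hcsum : ∑ i, 1 / c i = 1)
    -- the constants A_{s+j} and the maps φ_j
    (z : Fin (m + 1) → ℝ) (hz : ∀ i, 0 < z i)
    (A : Fin m → ℝ)
    (hA : ∀ j : Fin m, A j = -(c j.succ / z j.succ)
      * ∑ l : Fin (m + 1), (if (l : ℕ) ≤ (j : ℕ) then z l / c l else 0))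
    (φ : Fin m → (L →ₗ[ℝ] L))
    (hφ : ∀ (j : Fin m) (Z : L), φ j Z
      = (∑ l : Fin (m + 1), (if (l : ℕ) ≤ (j : ℕ) then π l Z else 0)) + A j • π j.succ Z) :
    ∀ (y : Fin (m + 1) → ℝ) (j : Fin m), ∀ Z ∈ k, ∀ W ∈ k,
      (∑ i, y i * killingForm ℝ ↥(K i)
          ⟨π i Z, hπmem i Z⟩ ⟨π i (φ j W), hπmem i (φ j W)⟩)
        = ((∑ l : Fin (m + 1), (if (l : ℕ) ≤ (j : ℕ) then y l / c l else 0))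
            + A j * (y j.succ / c j.succ))
          * killingForm ℝ L Z W := by
  -- `b i Z W = κ_g(Z_i, W_i)`, which equals the `κ_{g_i}(Z_i, W_i)` of the statement
  let b : Fin (m + 1) → L →ₗ[ℝ] L →ₗ[ℝ] ℝ := fun i => (killingForm ℝ L).compl₁₂ (π i) (π i)
  have hb : ∀ i Z W, b i Z W = killingForm ℝ L (π i Z) (π i W) := fun i Z W => rfl
  have hKf : ∀ i (U V : ↥(K i)), killingForm ℝ ↥(K i) U V = killingForm ℝ L (U : L) (V : L) :=
    fun i => killingForm_subalgebra_of_ideal (K i) (hKideal i)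
  have horth : ∀ i i', i ≠ i' → ∀ X Y, killingForm ℝ L (π i X) (π i' Y) = 0 := by
    intro i i' hne X Y
    refine killingForm_eq_zero_of_disjoint (K i) (K i') (hKideal i) (hKideal i') ?_
      (hπmem i X) (hπmem i' Y)
    intro T hT hT'
    rw [← hπid i' T hT', hπzero i i' hne T hT]
  have hbleft : ∀ i Z W, b i Z W = killingForm ℝ L (π i Z) W := by
    intro i Z W
    conv_rhs => rw [← hπsum W]
    rw [map_sum, Finset.sum_eq_single i (fun l _ hl => horth i l hl.symm Z W) (by simp), hb]
  have hbsum : ∀ Z W, killingForm ℝ L Z W = ∑ i, b i Z W := by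
    intro Z W
    conv_lhs => rw [← hπsum Z]
    rw [map_sum, LinearMap.sum_apply]
    exact Finset.sum_congr rfl fun i _ => (hbleft i Z W).symm
  have hbsymm : ∀ i Z W, b i Z W = b i W Z := fun i Z W =>
    LieModule.traceForm_comm ℝ L L _ _
  have hπlie₁ : ∀ i (X Y : L), π i ⁅X, Y⁆ = ⁅X, π i Y⁆ := by
    intro i X Y
    conv_lhs => rw [← hπsum Y]
    rw [lie_sum, map_sum, Finset.sum_eq_single i
      (fun l _ hl => hπzero l i hl _ (hKideal l _ _ (hπmem l Y))) (by simp)]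
    exact hπid i _ (hKideal i _ _ (hπmem i Y))
  have hπlie : ∀ i (X Y : L), π i ⁅X, Y⁆ = ⁅π i X, π i Y⁆ := by
    intro i X Y
    have h1 : π i ⁅X, π i Y⁆ = ⁅X, π i Y⁆ := hπid i _ (hKideal i _ _ (hπmem i Y))
    rw [hπlie₁, ← h1, ← lie_skew, map_neg, hπlie₁, lie_skew]
  have hbinv : ∀ i (X U V : L), b i X ⁅U, V⁆ = b i ⁅X, U⁆ V := by
    intro i X U V
    rw [hb, hb, hπlie, hπlie]
    exact (LieModule.traceForm_apply_lie_apply ℝ L L _ _ _).symm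
  have hsimple : ∀ i j U V (hU : U ∈ kj j) (hV : V ∈ kj j),
      c i * b i U V = killingForm ℝ ↥(kj j) ⟨U, hU⟩ ⟨V, hV⟩ / lam j := by
    intro i j U V hU hV
    have hmem : ∀ X ∈ kj j, π i X ∈ P i j := fun X hX => by
      rw [← SetLike.mem_coe, hPset]; exact ⟨X, hX, rfl⟩
    have h1 := killingForm_image_of_isSimple (kj j) (P i j) (hkjsimple j) (π i) (hπlie i)
      (hPset i j) (hPne i j) ⟨U, hU⟩ ⟨V, hV⟩ (hmem U hU) (hmem V hV)
    rw [← h1, hkilling, hKf, hb, eq_div_iff (hlam j).ne']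
    ring
  have hindep₁ : ∀ i i' j, ∀ X ∈ k, ∀ W ∈ kj j, c i * b i X W = c i' * b i' X W := by
    intro i i' j X hX W hW
    have := lie_induction_of_isSimple (kj j) (hkjsimple j) (c i • b i X - c i' • b i' X) ?_ W hW
    · simpa [sub_eq_zero] using this
    intro U V hU hV
    have hXU := hkjideal j X U hX hU
    simp only [LinearMap.sub_apply, LinearMap.smul_apply, smul_eq_mul]
    rw [hbinv, hbinv, hsimple i j _ _ hXU hV, hsimple i' j _ _ hXU hV, sub_self]
  have hindep : ∀ i i', ∀ Z ∈ k, ∀ W ∈ k, c i * b i Z W = c i' * b i' Z W := by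
    intro i i' Z hZ W hW
    obtain ⟨Z₀, f, hZ₀, hf, rfl⟩ := hkdecomp Z hZ
    obtain ⟨W₀, g, hW₀, hg, rfl⟩ := hkdecomp W hW
    have h00 : ∀ i, c i * b i Z₀ W₀ = - ip0 Z₀ W₀ := by
      intro i
      have h := hip0 i Z₀ hZ₀ W₀ hW₀
      rw [hKf] at h
      have hc := (hcpos i).ne'
      rw [hb, h]
      field_simp
    have hW₀k : W₀ ∈ k := ((hk₀ W₀).mp hW₀).1
    have hleft : c i * b i (Z₀ + ∑ j, f j) W₀ = c i' * b i' (Z₀ + ∑ j, f j) W₀ := by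
      simp only [map_add, map_sum, LinearMap.add_apply, LinearMap.sum_apply, mul_add,
        Finset.mul_sum]
      rw [h00, h00]
      congr 1
      refine Finset.sum_congr rfl fun j _ => ?_
      rw [hbsymm i, hbsymm i']
      exact hindep₁ i i' j W₀ hW₀k _ (hf j)
    rw [map_add (b i _), map_add (b i' _), mul_add, mul_add, hleft, map_sum (b i _),
      map_sum (b i' _), Finset.mul_sum, Finset.mul_sum]
    congr 1
    exact Finset.sum_congr rfl fun j _ => hindep₁ i i' j _ hZ _ (hg j)
  have hkey : ∀ i, ∀ Z ∈ k, ∀ W ∈ k, b i Z W = 1 / c i * killingForm ℝ L Z W := by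
    intro i Z hZ W hW
    have hsum : killingForm ℝ L Z W = c i * b i Z W := by
      calc killingForm ℝ L Z W = ∑ l, b l Z W := hbsum Z W
        _ = ∑ l, 1 / c l * (c i * b i Z W) := by
          refine Finset.sum_congr rfl fun l _ => ?_
          rw [hindep i l Z hZ W hW, ← mul_assoc, one_div_mul_cancel (hcpos l).ne', one_mul]
        _ = c i * b i Z W := by rw [← Finset.sum_mul, hcsum, one_mul]
    rw [hsum, ← mul_assoc, one_div_mul_cancel (hcpos i).ne', one_mul]
  intro y j Z hZ W hW
  have hππ : ∀ i l X, π i (π l X) = if l = i then π i X else 0 := by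
    intro i l X
    split_ifs with h
    · subst h; exact hπid l _ (hπmem l X)
    · exact hπzero l i h _ (hπmem l X)
  have hπφ : ∀ i, π i (φ j W)
      = ((if (i : ℕ) ≤ (j : ℕ) then 1 else 0) + (if i = j.succ then A j else 0)) • π i W := by
    intro i
    rw [hφ, map_add, map_sum, map_smul, hππ, add_smul]
    congr 1
    · rw [Finset.sum_eq_single i]
      · split_ifs <;> simp [hππ]
      · intro l _ hl
        split_ifs <;> simp [hππ, hl]
      · simp
    · by_cases h : i = j.succ
      · simp [h]
      · simp [h, Ne.symm h]
  have hterm : ∀ i, y i * killingForm ℝ ↥(K i) ⟨π i Z, hπmem i Z⟩ ⟨π i (φ j W), hπmem i (φ j W)⟩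
      = ((if (i : ℕ) ≤ (j : ℕ) then y i / c i else 0)
          + (if i = j.succ then A j * (y i / c i) else 0)) * killingForm ℝ L Z W := by
    intro i
    rw [hKf]
    simp only [hπφ]
    rw [map_smul, ← hb, hkey i Z hZ W hW, smul_eq_mul]
    split_ifs <;> ring
  rw [Finset.sum_congr rfl fun i _ => hterm i, ← Finset.sum_mul, Finset.sum_add_distrib]
  simp
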